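/- arXiv:2212.03644 — 2 statements merged into one kernel-verified Lean document; each statement's English description precedes it below -/
import Mathlib

section
/- Let s be the smallest nonnegative integer such that t divides m + s, and assume t ≤ m. Then for all nonnegative integers α, β, γ there exists an (α(p^t - 1) + β(p^s - 1), β·p^s + γ·(p^t-1)/(p-1))-spread of t-multisubspaces of F_p^m. -/
noncomputable def spanCount {K : Type} [Field K] {m t : ℕ} (T : Fin t → Fin m → K)
    (u : Fin m → K) : ℕ :=
  Nat.card {a : Fin t → K // ∑ j, a j • T j = u}

def IsMultispread {K : Type} [Field K] [DecidableEq K] {m t n : ℕ}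
    (T : Fin n → Fin t → Fin m → K) (lam mu : ℕ) : Prop :=
  ∀ u : Fin m → K, (∑ i, spanCount (T i) u) = if u = 0 then n + lam else mu

open scoped LinearAlgebra.Projectivization

/-- existence of a multispread with given parameters -/
def HasMS (K : Type) [Field K] [DecidableEq K] (m t lam mu : ℕ) : Prop :=
  ∃ (n : ℕ) (T : Fin n → Fin t → Fin m → K), IsMultispread T lam mu

lemma hasMS_of_maps {K : Type} [Field K] [Fintype K] [DecidableEq K] {m t lam mu : ℕ}
    {ι V : Type} [Finite ι] [AddCommGroup V] [Module K V] [Module.Finite K V]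
    (hV : Module.finrank K V = t)
    (f : ι → V →ₗ[K] (Fin m → K))
    (h0 : Nat.card {x : ι × V // f x.1 x.2 = 0} = Nat.card ι + lam)
    (h1 : ∀ u, u ≠ 0 → Nat.card {x : ι × V // f x.1 x.2 = u} = mu) :
    HasMS K m t lam mu := by
  classical
  let B : Module.Basis (Fin t) K V := Module.finBasisOfFinrankEq K V hV
  let e : Fin (Nat.card ι) ≃ ι := (Finite.equivFin ι).symm
  refine ⟨Nat.card ι, fun i j => f (e i) (B j), fun u => ?_⟩
  have : Finite V := Module.finite_of_finite K
  have key : (∑ i, spanCount (fun j => f (e i) (B j)) u)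
      = Nat.card {x : ι × V // f x.1 x.2 = u} := by
    unfold spanCount
    rw [← Nat.card_sigma]
    refine Nat.card_congr (Equiv.ofBijective
      (fun x => ⟨(e x.1, B.equivFun.symm x.2.1), ?_⟩) ⟨?_, ?_⟩)
    · refine Eq.trans ?_ x.2.2
      simp [Module.Basis.equivFun_symm_apply]
    · rintro ⟨i, a, ha⟩ ⟨i', a', ha'⟩ h
      simp only [Subtype.mk.injEq, Prod.mk.injEq, EmbeddingLike.apply_eq_iff_eq] at h
      obtain ⟨rfl, rfl⟩ := h
      rfl
    · rintro ⟨⟨i, v⟩, h⟩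
      refine ⟨⟨e.symm i, B.equivFun v, ?_⟩, ?_⟩
      · rw [← h]
        show _ = f i v
        conv_rhs => rw [← B.sum_equivFun v, map_sum]
        simp
      · simp
  rw [key]
  split_ifs with h
  · rw [h, h0]
  · exact h1 u h

lemma HasMS.zero {K : Type} [Field K] [DecidableEq K] {m t : ℕ} : HasMS K m t 0 0 :=
  ⟨0, fun i => i.elim0, fun u => by simp⟩

lemma HasMS.add {K : Type} [Field K] [DecidableEq K] {m t l₁ m₁ l₂ m₂ : ℕ}
    (h₁ : HasMS K m t l₁ m₁) (h₂ : HasMS K m t l₂ m₂) :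
    HasMS K m t (l₁ + l₂) (m₁ + m₂) := by
  obtain ⟨n, T, hT⟩ := h₁
  obtain ⟨n', T', hT'⟩ := h₂
  refine ⟨n + n', Fin.append T T', fun u => ?_⟩
  rw [Fin.sum_univ_add]
  simp only [Fin.append_left, Fin.append_right]
  rw [hT u, hT' u]
  split_ifs <;> ring

lemma HasMS.nsmul {K : Type} [Field K] [DecidableEq K] {m t l₁ m₁ : ℕ}
    (h₁ : HasMS K m t l₁ m₁) (a : ℕ) : HasMS K m t (a * l₁) (a * m₁) := by
  induction a with
  | zero => simpa using HasMS.zero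
  | succ a ih => rw [add_mul, add_mul, one_mul, one_mul]; exact ih.add h₁

lemma hasMS_trivial (K : Type) [Field K] [Fintype K] [DecidableEq K] (m t : ℕ) :
    HasMS K m t (Fintype.card K ^ t - 1) 0 := by
  refine hasMS_of_maps (ι := Unit) (V := Fin t → K) (by simp) (fun _ => 0) ?_ ?_
  · have : 0 < Fintype.card K ^ t := pow_pos Fintype.card_pos _
    simp
    omega
  · intro u hu
    have : IsEmpty {x : Unit × (Fin t → K) // (0 : (Fin t → K) →ₗ[K] (Fin m → K)) x.2 = u} :=
      ⟨fun x => hu (by rw [← x.2]; simp)⟩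
    exact Nat.card_of_isEmpty

lemma exists_ext (K : Type) [Field K] [Fintype K] (t : ℕ) (ht : 0 < t) :
    ∃ (L : Type) (_ : Field L) (_ : Algebra K L), Module.Finite K L ∧
      Module.finrank K L = t := by
  obtain ⟨q, hq⟩ := CharP.exists K
  have : Fact q.Prime := ⟨CharP.char_is_prime K q⟩
  have : NeZero t := ⟨ht.ne'⟩
  exact ⟨FiniteField.Extension K q t, inferInstance, inferInstance, inferInstance,
    FiniteField.finrank_extension K q t⟩

lemma zero_count {ι V M : Type} [Finite ι] [AddCommGroup V] [AddCommGroup M]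
    (f : ι → V →+ M) (hf : ∀ i v, f i v = 0 → v = 0) :
    Nat.card {x : ι × V // f x.1 x.2 = 0} = Nat.card ι := by
  refine Nat.card_congr (Equiv.ofBijective (fun x => x.1.1) ⟨?_, ?_⟩)
  · rintro ⟨⟨i, v⟩, h⟩ ⟨⟨j, w⟩, h'⟩ rfl
    have h1 := hf _ _ h
    have h2 := hf _ _ h'
    simp only at h1 h2
    subst h1 h2
    rfl
  · intro i
    exact ⟨⟨(i, 0), by simp⟩, rfl⟩

lemma hasMS_sub (K : Type) [Field K] [Fintype K] [DecidableEq K] (m t : ℕ) (ht : 0 < t)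
    (htm : t ≤ m) :
    HasMS K m t 0 ((Fintype.card K ^ t - 1) / (Fintype.card K - 1)) := by
  obtain ⟨L, _, _, hL, hd⟩ := exists_ext K m (ht.trans_le htm)
  have : Finite L := Module.finite_of_finite K
  obtain ⟨W, hW⟩ : ∃ W : Submodule K L, Module.finrank K W = t := by
    obtain ⟨v, hv⟩ := exists_linearIndependent_of_le_finrank (R := K) (M := L) (n := t) (by omega)
    exact ⟨Submodule.span K (Set.range v), by simpa using finrank_span_eq_card hv⟩
  let e : L ≃ₗ[K] (Fin m → K) := LinearEquiv.ofFinrankEq _ _ (by simpa)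
  have hcard : Nat.card (ℙ K W) = (Fintype.card K ^ t - 1) / (Fintype.card K - 1) := by
    rw [Projectivization.card'', Module.natCard_eq_pow_finrank (K := K), hW,
      Nat.card_eq_fintype_card]
  let f : ℙ K L → W →ₗ[K] (Fin m → K) := fun x =>
    e.toLinearMap ∘ₗ (LinearMap.mulLeft K x.rep) ∘ₗ W.subtype
  have hf : ∀ x w, f x w = e (x.rep * (w : L)) := fun x w => rfl
  refine hasMS_of_maps hW f ?_ ?_
  · rw [add_zero]
    refine zero_count (fun x => (f x).toAddMonoidHom) ?_
    intro x w h
    have h' : e (x.rep * (w : L)) = 0 := h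
    simpa [x.rep_nonzero] using h'
  · intro u hu
    rw [← hcard]
    have hne : ∀ x : {x : ℙ K L × W // f x.1 x.2 = u}, x.1.2 ≠ 0 := by
      rintro ⟨⟨x, w⟩, h⟩ h0
      simp only at h0
      apply hu
      rw [← h, h0]
      simp
    refine Nat.card_congr (Equiv.ofBijective
      (fun x => Projectivization.mk K x.1.2 (hne x)) ⟨?_, ?_⟩)
    · intro x y hxy
      have hx0 := hne x
      have hy0 := hne y
      obtain ⟨⟨x, w⟩, h⟩ := x
      obtain ⟨⟨y, w'⟩, h'⟩ := y
      simp only [Projectivization.mk_eq_mk_iff'] at hxy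
      simp only at hx0 hy0
      obtain ⟨c, rfl⟩ := hxy
      have h2 : e (x.rep * ((c • w' : W) : L)) = e (y.rep * (w' : L)) := h.trans h'.symm
      have h3 := e.injective h2
      have hw' : (w' : L) ≠ 0 := by simpa using hy0
      have h4 : c • x.rep = y.rep := by
        apply mul_right_cancel₀ hw'
        rw [← h3]
        simp
      have hxy : y = x := by
        rw [← x.mk_rep, ← y.mk_rep, Projectivization.mk_eq_mk_iff']
        exact ⟨c, h4⟩
      subst hxy
      have h5 := mul_left_cancel₀ y.rep_nonzero h3
      have h6 : c • w' = w' := Subtype.ext h5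
      simp [h6]
    · intro P
      induction P using Projectivization.ind with | h w hw =>
      have hw' : (w : L) ≠ 0 := by simpa using hw
      have hu' : e.symm u ≠ 0 := by simpa using hu
      have hq : e.symm u / (w : L) ≠ 0 := div_ne_zero hu' hw'
      obtain ⟨c, hc⟩ := Projectivization.exists_smul_eq_mk_rep K (e.symm u / (w : L)) hq
      refine ⟨⟨(Projectivization.mk K _ hq, c⁻¹ • w), ?_⟩, ?_⟩
      · show e _ = u
        rw [← LinearEquiv.eq_symm_apply]
        show Projectivization.rep _ * ((c⁻¹ : Kˣ) : K) • (w : L) = _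
        rw [← hc, Units.smul_def, smul_mul_smul_comm, Units.mul_inv, one_smul,
          div_mul_cancel₀ _ hw']
      · simp only [Projectivization.mk_eq_mk_iff]
        exact ⟨c⁻¹, rfl⟩

lemma hasMS_field (K : Type) [Field K] [Fintype K] [DecidableEq K] (m t s : ℕ) (ht : 0 < t)
    (hs : t ∣ m + s) :
    HasMS K m t (Fintype.card K ^ s - 1) (Fintype.card K ^ s) := by
  obtain ⟨L, _, _, hL, hd⟩ := exists_ext K t ht
  have : Finite L := Module.finite_of_finite K
  obtain ⟨k, hk⟩ := hs
  let M := Fin k → L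
  let e : (Fin k → L) ≃ₗ[K] ((Fin m → K) × (Fin s → K)) :=
    LinearEquiv.ofFinrankEq _ _ (by
      rw [Module.finrank_pi_fintype]
      simp [hd, hk, mul_comm])
  let g : ℙ L (Fin k → L) → L →ₗ[K] (Fin k → L) := fun x =>
    (LinearMap.toSpanSingleton L (Fin k → L) x.rep).restrictScalars K
  have hg : ∀ x a, g x a = a • x.rep := fun x a => rfl
  let f : ℙ L (Fin k → L) → L →ₗ[K] (Fin m → K) := fun x =>
    LinearMap.fst K _ _ ∘ₗ e.toLinearMap ∘ₗ g x
  have hf : ∀ x a, f x a = (e (a • x.rep)).1 := fun x a => rfl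
  have hz : Nat.card {x : ℙ L (Fin k → L) × L // g x.1 x.2 = 0} = Nat.card (ℙ L (Fin k → L)) := by
    refine zero_count (fun x => (g x).toAddMonoidHom) ?_
    intro x a h
    have h' : a • x.rep = 0 := h
    simpa [x.rep_nonzero] using h'
  have h1 : ∀ v : Fin k → L, v ≠ 0 →
      Nat.card {x : ℙ L (Fin k → L) × L // g x.1 x.2 = v} = 1 := by
    intro v hv
    rw [Nat.card_eq_one_iff_unique]
    constructor
    · constructor
      rintro ⟨⟨x, a⟩, h⟩ ⟨⟨y, b⟩, h'⟩
      simp only [hg] at h h'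
      have hx : ∀ (x : ℙ L (Fin k → L)) (a : L), a • x.rep = v →
          x = Projectivization.mk L v hv := by
        intro x a h
        conv_lhs => rw [← x.mk_rep]
        symm
        rw [Projectivization.mk_eq_mk_iff']
        exact ⟨a, h⟩
      have e1 := hx x a h
      have e2 := hx y b h'
      have e3 : x = y := e1.trans e2.symm
      subst e3
      have : a = b := smul_left_injective L x.rep_nonzero (h.trans h'.symm)
      subst this
      rfl
    · obtain ⟨c, hc⟩ := Projectivization.exists_smul_eq_mk_rep L v hv
      exact ⟨⟨(Projectivization.mk L v hv, ((c⁻¹ : Lˣ) : L)), by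
        rw [hg, ← hc]; exact inv_smul_smul c v⟩⟩
  have hsum : ∀ u, Nat.card {x : ℙ L (Fin k → L) × L // f x.1 x.2 = u} =
      ∑ z : Fin s → K, Nat.card {x : ℙ L (Fin k → L) × L // g x.1 x.2 = e.symm (u, z)} := by
    intro u
    rw [← Nat.card_sigma]
    refine Nat.card_congr (Equiv.ofBijective
      (fun x => ⟨(e (g x.1.1 x.1.2)).2, ⟨x.1, ?_⟩⟩) ⟨?_, ?_⟩)
    · rw [LinearEquiv.eq_symm_apply]
      exact Prod.ext x.2 rfl
    · rintro ⟨x, hx⟩ ⟨y, hy⟩ h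
      have h' := congrArg (fun w : (Σ z : Fin s → K,
        {x : ℙ L (Fin k → L) × L // g x.1 x.2 = e.symm (u, z)}) => w.2.1) h
      exact Subtype.ext h'
    · rintro ⟨z, x, hx⟩
      have hx' := hx
      rw [LinearEquiv.eq_symm_apply] at hx'
      obtain rfl : z = (e (g x.1 x.2)).2 := by rw [hx']
      exact ⟨⟨x, congrArg Prod.fst hx'⟩, rfl⟩
  refine hasMS_of_maps hd f ?_ ?_
  · rw [hsum, ← Finset.add_sum_erase _ _ (Finset.mem_univ (0 : Fin s → K))]
    congr 1
    · rw [← hz]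
      congr!
      exact map_zero e.symm
    · rw [Finset.sum_congr rfl (g := fun _ => 1)]
      · simp [Finset.card_erase_of_mem]
      · intro z hz
        apply h1
        simpa using hz
  · intro u hu
    rw [hsum, Finset.sum_congr rfl (g := fun _ => 1)]
    · simp
    · intro z hz
      apply h1
      simp [hu]

theorem stmt_11 (p t m s a b c : ℕ) (K : Type) [Field K] [Fintype K]
    [DecidableEq K] (hK : Fintype.card K = p)
    (ht : 0 < t) (htm : t ≤ m)
    (hs : t ∣ m + s) (hmin : ∀ s' : ℕ, s' < s → ¬ t ∣ m + s') :
    ∃ (n : ℕ) (T : Fin n → Fin t → Fin m → K),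
      IsMultispread T (a * (p ^ t - 1) + b * (p ^ s - 1))
        (b * p ^ s + c * ((p ^ t - 1) / (p - 1))) := by
  subst hK
  have h := (((hasMS_trivial K m t).nsmul a).add ((hasMS_field K m t s ht hs).nsmul b)).add
    ((hasMS_sub K m t ht htm).nsmul c)
  simp only [mul_zero, zero_add, add_zero] at h
  exact h
end

section
/- Let q = p^t with p prime. A μ-fold 1-perfect code in H(n,q) exists if and only if (i) μ < (q-1)n + 1, (ii) μ·q^n/((q-1)n+1) is an integer, and (iii) n ≡ 1 (mod q). -/
open Finset

theorem ball_sum {n q : ℕ} {M : Type*} [AddCommMonoid M] (f : (Fin n → Fin q) → M)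
    (x : Fin n → Fin q) :
    ∑ y ∈ univ.filter (fun y => hammingDist x y ≤ 1), f y =
      f x + ∑ i, ∑ a ∈ univ.erase (x i), f (Function.update x i a) := by
  have h1 : (univ.filter (fun y : Fin n → Fin q => hammingDist x y ≤ 1)) =
      insert x (univ.filter (fun y => hammingDist x y = 1)) := by
    ext y
    simp only [mem_filter, mem_univ, true_and, mem_insert]
    rw [Nat.le_one_iff_eq_zero_or_eq_one, hammingDist_eq_zero, eq_comm]
  rw [h1, sum_insert (by simp)]
  congr 1
  rw [Finset.sum_sigma']
  symm
  refine Finset.sum_bij (fun z _ => Function.update x z.1 z.2) ?_ ?_ ?_ ?_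
  · rintro ⟨i, a⟩ h
    simp only [mem_sigma, mem_univ, mem_erase, true_and, and_true] at h
    simp only [mem_filter, mem_univ, true_and, hammingDist]
    rw [Finset.card_eq_one]
    refine ⟨i, ?_⟩
    ext j
    by_cases hj : j = i
    · subst hj; simp [Ne.symm h]
    · simp [hj]
  · rintro ⟨i, a⟩ h ⟨j, b⟩ h' he
    simp only [mem_sigma, mem_univ, mem_erase, true_and, and_true] at h h'
    simp only at he
    have hij : i = j := by
      by_contra hne
      have := congrFun he i
      rw [Function.update_self, Function.update_of_ne hne] at this
      exact h this
    subst hij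
    have := congrFun he i
    simp only [Function.update_self] at this
    rw [this]
  · intro y hy
    simp only [mem_filter, mem_univ, true_and, hammingDist] at hy
    obtain ⟨i, hi⟩ := Finset.card_eq_one.1 hy
    have hm : ∀ j, x j ≠ y j ↔ j = i := by
      intro j
      have := Finset.ext_iff.1 hi j
      simpa using this
    refine ⟨⟨i, y i⟩, ?_, ?_⟩
    · have := (hm i).2 rfl
      simpa using Ne.symm this
    · ext1 j
      by_cases hj : j = i
      · subst hj; simp
      · simp only [Function.update_of_ne hj]
        by_contra hne
        exact hj ((hm j).1 hne)
  · intros; rfl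

theorem eig {ι W : Type*} [AddCommGroup W] [Module ℚ W] (q : ℚ) (J : ι → Module.End ℚ W)
    (hc : ∀ i j w, J i (J j w) = J j (J i w)) (hq : ∀ i w, J i (J i w) = q • J i w)
    (s : Finset ι) : ∀ (l : ℚ) (f : W), f ≠ 0 → (∑ i ∈ s, J i f) = l • f → ∃ k : ℕ, l = k * q := by
  classical
  induction s using Finset.induction_on with
  | empty =>
    intro l f hf h
    simp only [sum_empty] at h
    rcases smul_eq_zero.1 h.symm with h | h
    · exact ⟨0, by simp [h]⟩
    · exact absurd h hf
  | insert j s hj ih =>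
    intro l f hf h
    rw [sum_insert hj] at h
    by_cases h0 : J j f = 0
    · rw [h0, zero_add] at h
      exact ih l f hf h
    · obtain ⟨k, hk⟩ := ih (l - q) (J j f) h0 (by
        have := congrArg (J j) h
        rw [map_add, map_sum, hq, map_smul] at this
        rw [sub_smul, ← this, add_sub_cancel_left]
        exact sum_congr rfl fun i _ => hc i j f)
      exact ⟨k + 1, by push_cast; linarith⟩

theorem ball_card {n q : ℕ} (hq : 0 < q) (x : Fin n → Fin q) :
    (univ.filter (fun y => hammingDist x y ≤ 1)).card = (q - 1) * n + 1 := by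
  rw [card_eq_sum_ones, ball_sum (fun _ => 1) x]
  simp [card_erase_of_mem]
  ring

def Jop (n q : ℕ) (i : Fin n) : Module.End ℚ ((Fin n → Fin q) → ℚ) where
  toFun f := fun x => ∑ a, f (Function.update x i a)
  map_add' f g := by ext x; simp [sum_add_distrib]
  map_smul' c f := by ext x; simp [mul_sum]

theorem necessity (n q μ : ℕ) (hq : 0 < q) (C : Set (Fin n → Fin q)) (hC : C.Nonempty)
    (hC' : C ≠ Set.univ)
    (h : ∀ x : Fin n → Fin q,
          Nat.card {y : Fin n → Fin q // y ∈ C ∧ hammingDist x y ≤ 1} = μ) :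
    μ < (q - 1) * n + 1 ∧ ((q - 1) * n + 1) ∣ μ * q ^ n ∧ n ≡ 1 [MOD q] := by
  classical
  have hcard : ∀ x : Fin n → Fin q,
      (univ.filter (fun y => y ∈ C ∧ hammingDist x y ≤ 1)).card = μ := by
    intro x
    rw [← h x, Nat.card_eq_fintype_card, Fintype.card_subtype]
  have hsum : ∀ x : Fin n → Fin q,
      ∑ y ∈ univ.filter (fun y => hammingDist x y ≤ 1), (if y ∈ C then 1 else 0) = μ := by
    intro x
    rw [← hcard x, ← card_filter, filter_filter]
    congr 1
    ext y; simp [and_comm]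
  obtain ⟨z, hz⟩ := (Set.ne_univ_iff_exists_notMem C).1 hC'
  refine ⟨?_, ?_, ?_⟩
  · rw [← hcard z, ← ball_card hq z]
    apply card_lt_card
    rw [ssubset_iff_of_subset (fun y hy => by
      simp only [mem_filter, mem_univ, true_and] at hy ⊢
      exact hy.2)]
    exact ⟨z, by simp, by simp [hz]⟩
  · have e : ∑ x : Fin n → Fin q, ∑ y : Fin n → Fin q,
        (if hammingDist x y ≤ 1 then (if y ∈ C then 1 else 0) else 0) = μ * q ^ n := by
      rw [sum_congr rfl (g := fun _ => μ) (fun x _ => by rw [← sum_filter]; exact hsum x)]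
      simp [mul_comm]
    rw [sum_comm] at e
    rw [← e]
    apply dvd_sum
    intro y _
    by_cases hy : y ∈ C
    · simp only [hy, if_true]
      rw [← card_filter, ← ball_card hq y]
      simp_rw [hammingDist_comm _ y]
      exact dvd_rfl
    · simp [hy]
  · set N := (q - 1) * n + 1 with hN
    let f : (Fin n → Fin q) → ℚ := fun y => N * (if y ∈ C then 1 else 0) - μ
    have hf : f ≠ 0 := by
      intro h0
      obtain ⟨w, hw⟩ := hC
      have h1 := congrFun h0 w
      have h2 := congrFun h0 z
      simp [f, hw] at h1
      simp [f, hz] at h2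
      rw [h2] at h1
      simp at h1
    have hbal : ∀ x, ∑ y ∈ univ.filter (fun y => hammingDist x y ≤ 1), f y = 0 := by
      intro x
      have := hsum x
      simp only [f]
      rw [sum_sub_distrib, ← mul_sum, sum_const, ball_card hq x, ← hN]
      have h3 : (∑ y ∈ univ.filter (fun y => hammingDist x y ≤ 1), (if y ∈ C then (1:ℚ) else 0)) = μ := by
        rw [← this]; push_cast; rfl
      rw [h3]; simp
    obtain ⟨k, hk⟩ := eig (q : ℚ) (Jop n q) (by
        intro i j w
        ext x
        simp only [Jop, LinearMap.coe_mk, AddHom.coe_mk]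
        by_cases hij : i = j
        · subst hij; rfl
        · rw [sum_comm]
          simp_rw [Function.update_comm hij]) (by
        intro i w
        ext x
        simp [Jop]) univ ((n : ℚ) - 1) f hf (by
        ext x
        have := hbal x
        rw [ball_sum] at this
        simp_rw [sum_erase_eq_sub (mem_univ _), Function.update_eq_self] at this
        simp only [Jop, LinearMap.coe_mk, AddHom.coe_mk, Finset.sum_apply, Pi.smul_apply, smul_eq_mul]
        rw [sum_sub_distrib] at this
        simp at this
        linarith)
    have : n = 1 + k * q := by
      have : (n : ℚ) = 1 + k * q := by linarith
      exact_mod_cast this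
    rw [this]
    simp [Nat.ModEq]

/-- A (generalised) multispread: together with an extra zero, the images of the nonzero elements
cover every element of `G` exactly `ν` times. -/
def MS {ι F G : Type} [Fintype ι] [AddCommGroup F] [Fintype F] [DecidableEq F] [AddCommGroup G]
    [Fintype G] (h : ι → F →+ G) (ν : ℕ) : Prop :=
  ∀ g : G → ℕ, g 0 + ∑ i, ∑ x ∈ univ.erase (0 : F), g (h i x) = ν * ∑ v, g v

theorem MS.card {ι F G : Type} [Fintype ι] [AddCommGroup F] [Fintype F] [DecidableEq F]
    [AddCommGroup G] [Fintype G] {h : ι → F →+ G} {ν : ℕ} (H : MS h ν) :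
    (Fintype.card F - 1) * Fintype.card ι + 1 = ν * Fintype.card G := by
  have := H (fun _ => 1)
  simp [card_erase_of_mem] at this
  rw [← this]; ring

theorem surj_sum {V G : Type} [AddCommGroup V] [Fintype V] [AddCommGroup G] [Fintype G]
    (π : V →+ G) (hπ : Function.Surjective π) (ν : ℕ)
    (hν : Fintype.card V = ν * Fintype.card G) (g : G → ℕ) :
    ∑ w, g (π w) = ν * ∑ v, g v := by
  classical
  have key : ∀ g : G → ℕ, ∑ w, g (π w) = (univ.filter (fun w => π w = 0)).card * ∑ v, g v := by
    intro g
    rw [← Finset.sum_fiberwise_of_maps_to (s := univ) (t := univ) (g := π) (by simp), mul_sum]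
    refine sum_congr rfl fun v _ => ?_
    rw [sum_congr rfl (g := fun _ => g v) (by
      intro w hw
      simp only [mem_filter] at hw
      rw [hw.2])]
    rw [sum_const, smul_eq_mul]
    congr 1
    exact AddMonoidHom.card_fiber_eq_of_mem_range π (hπ v) (hπ 0)
  have h1 := key (fun _ => 1)
  simp only [sum_const, card_univ, smul_eq_mul, mul_one] at h1
  rw [key g]
  congr 1
  have : 0 < Fintype.card G := Fintype.card_pos
  exact Nat.eq_of_mul_eq_mul_right this (h1.symm.trans hν)

open scoped LinearAlgebra.Projectivization in
theorem exists_base {F V G : Type} [Field F] [Fintype F] [DecidableEq F] [AddCommGroup V]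
    [Fintype V] [Module F V] [AddCommGroup G] [Fintype G]
    (π : V →+ G) (hπ : Function.Surjective π) (ν : ℕ)
    (hν : Fintype.card V = ν * Fintype.card G) :
    ∃ (ι : Type) (_ : Fintype ι) (h : ι → F →+ G), MS h ν := by
  classical
  refine ⟨ℙ F V, Fintype.ofFinite _,
    fun P => π.comp ((smulAddHom F V).flip P.rep), ?_⟩
  let _ : Fintype (ℙ F V) := Fintype.ofFinite _
  intro g
  rw [← surj_sum π hπ ν hν g, ← Finset.add_sum_erase univ _ (mem_univ (0 : V)), map_zero]
  congr 1
  rw [Finset.sum_sigma']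
  refine Finset.sum_bij (fun z _ => z.2 • z.1.rep) ?_ ?_ ?_ ?_
  · rintro ⟨P, a⟩ h
    simp only [mem_sigma, mem_univ, mem_erase, true_and, and_true] at h
    simp [h, P.rep_nonzero]
  · rintro ⟨P, a⟩ h ⟨Q, b⟩ h' he
    simp only [mem_sigma, mem_univ, mem_erase, true_and, and_true] at h h'
    have hPQ : P = Q := by
      rw [← P.mk_rep, ← Q.mk_rep, Projectivization.mk_eq_mk_iff']
      refine ⟨a⁻¹ * b, ?_⟩
      rw [mul_smul, ← he, smul_smul, inv_mul_cancel₀ h, one_smul]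
    subst hPQ
    have : a = b := smul_left_injective F P.rep_nonzero he
    rw [this]
  · intro w hw
    simp only [mem_erase, mem_univ, and_true] at hw
    obtain ⟨a, ha⟩ := Projectivization.exists_smul_eq_mk_rep F w hw
    refine ⟨⟨Projectivization.mk F w hw, (a⁻¹ : Fˣ)⟩, by simp, ?_⟩
    simp only [← ha]
    rw [Units.smul_def, smul_smul]
    simp
  · rintro ⟨P, a⟩ h
    simp

theorem exists_inc {F L G : Type} [AddCommGroup F] [Fintype F] [DecidableEq F] [Field L]
    [Fintype L] [AddCommGroup G] [Fintype G] (φ : F →+ L) (hφ : Function.Injective φ)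
    (π : L →+ G) (hπ : Function.Surjective π) (ν : ℕ)
    (hν : Fintype.card L = ν * Fintype.card G) :
    ∃ h : L → F →+ G, ∀ g : G → ℕ, ∑ i, ∑ x ∈ univ.erase (0 : F), g (h i x) =
      ((Fintype.card F - 1) * ν) * ∑ v, g v := by
  refine ⟨fun c => π.comp ((AddMonoidHom.mulLeft c).comp φ), fun g => ?_⟩
  rw [sum_comm, sum_congr rfl (g := fun _ => ν * ∑ v, g v)]
  · rw [sum_const, card_erase_of_mem (mem_univ _), card_univ, smul_eq_mul, mul_assoc]
  · intro x hx
    simp only [mem_erase, mem_univ, and_true] at hx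
    have hx' : φ x ≠ 0 := fun h => hx (hφ (by rw [h, map_zero]))
    rw [← surj_sum π hπ ν hν g]
    exact Fintype.sum_bijective (fun c => c * φ x) (mulRight_bijective₀ _ hx') _ _
      (fun c => by simp)

theorem MS.add {ι κ F G : Type} [Fintype ι] [Fintype κ] [AddCommGroup F] [Fintype F]
    [DecidableEq F] [AddCommGroup G] [Fintype G] {h : ι → F →+ G} {ν : ℕ} (H : MS h ν)
    (k : κ → F →+ G) (b : ℕ)
    (hk : ∀ g : G → ℕ, ∑ i, ∑ x ∈ univ.erase (0 : F), g (k i x) = b * ∑ v, g v) (j : ℕ) :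
    ∃ (ι' : Type) (_ : Fintype ι') (h : ι' → F →+ G), MS h (ν + j * b) := by
  refine ⟨ι ⊕ (Fin j × κ), inferInstance, Sum.elim h (fun z => k z.2), fun g => ?_⟩
  rw [Fintype.sum_sum_type]
  simp only [Sum.elim_inl, Sum.elim_inr]
  rw [← add_assoc, H g, Fintype.sum_prod_type]
  simp only [hk]
  simp; ring

theorem exists_surj (p : ℕ) [Fact p.Prime] (V : Type) [AddCommGroup V] [Module (ZMod p) V]
    [Finite V] (m : ℕ) (hm : m ≤ Module.finrank (ZMod p) V) :
    ∃ f : V →ₗ[ZMod p] (Fin m → ZMod p), Function.Surjective f := by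
  let e : V ≃ₗ[ZMod p] (Fin (Module.finrank (ZMod p) V) → ZMod p) :=
    LinearEquiv.ofFinrankEq _ _ (by simp)
  refine ⟨(LinearMap.funLeft (ZMod p) (ZMod p) (Fin.castLE hm)).comp e.toLinearMap, ?_⟩
  rw [LinearMap.coe_comp]
  exact (LinearMap.funLeft_surjective_of_injective _ _ _ (Fin.castLE_injective hm)).comp e.surjective

theorem exists_MS (p t m n ν : ℕ) [Fact p.Prime] (ht : 0 < t) (hm : 0 < m) 
    (hn : n ≡ 1 [MOD p ^ t]) (hN : (p ^ t - 1) * n + 1 = ν * p ^ m)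
    [Fintype (GaloisField p t)] [DecidableEq (GaloisField p t)] :
    ∃ (ι : Type) (_ : Fintype ι) (h : ι → GaloisField p t →+ (Fin m → ZMod p)), MS h ν := by
  classical
  have hp : p.Prime := Fact.out
  have hcF : Fintype.card (GaloisField p t) = p ^ t := by
    rw [← Nat.card_eq_fintype_card, GaloisField.card p t ht.ne']
  have hcG : Fintype.card (Fin m → ZMod p) = p ^ m := by simp [ZMod.card]
  have gen : ∀ A M j : ℕ, m ≤ A * t → m ≤ M → t ≤ M →
      ν = p ^ (A * t - m) + j * ((p ^ t - 1) * p ^ (M - m)) → 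
      ∃ (ι : Type) (_ : Fintype ι) (h : ι → GaloisField p t →+ (Fin m → ZMod p)), MS h ν := by
    intro A M j hA hmM htM hν
    have hM : M ≠ 0 := by omega
    obtain ⟨π, hπ⟩ := exists_surj p (Fin A → GaloisField p t) m (by
      rw [Module.finrank_pi_fintype]; simp [GaloisField.finrank p ht.ne', hA])
    obtain ⟨ι, _, h, H⟩ := exists_base (F := GaloisField p t) (π : (Fin A → GaloisField p t) →+ _) hπ
      (p ^ (A * t - m)) (by
        rw [hcG, ← pow_add, Nat.sub_add_cancel hA]
        simp [hcF, ← pow_mul, mul_comm])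
    let _ : Fintype (GaloisField p M) := Fintype.ofFinite _
    obtain ⟨π', hπ'⟩ := exists_surj p (GaloisField p M) m (by
      rw [GaloisField.finrank p hM]; exact hmM)
    obtain ⟨σ, hσ⟩ := exists_surj p (GaloisField p M) t (by
      rw [GaloisField.finrank p hM]; exact htM)
    obtain ⟨ψ, hψ⟩ := σ.exists_rightInverse_of_surjective (LinearMap.range_eq_top.2 hσ)
    let e : GaloisField p t ≃ₗ[ZMod p] (Fin t → ZMod p) :=
      LinearEquiv.ofFinrankEq _ _ (by simp [GaloisField.finrank p ht.ne'])
    have hψi : Function.Injective ψ := by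
      intro a b hab
      have := congrArg σ hab
      rwa [← LinearMap.comp_apply, ← LinearMap.comp_apply, hψ] at this
    obtain ⟨k, hk⟩ := exists_inc (F := GaloisField p t) (L := GaloisField p M)
      ((ψ.comp e.toLinearMap : _ →ₗ[ZMod p] _) : GaloisField p t →+ GaloisField p M)
      (hψi.comp e.injective) (π' : GaloisField p M →+ _) hπ' (p ^ (M - m)) (by
        rw [hcG, ← pow_add, Nat.sub_add_cancel hmM, ← Nat.card_eq_fintype_card, GaloisField.card p M hM])
    rw [hcF] at hk
    rw [hν]
    exact MS.add H k _ hk j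
  have hq2 : 2 ≤ p ^ t := hp.two_le.trans (Nat.le_self_pow ht.ne' p)
  have hν0 : 0 < ν := by
    rcases Nat.eq_zero_or_pos ν with h | h
    · rw [h] at hN; omega
    · exact h
  rcases le_total m t with hmt | hmt
  · -- write n = 1 + q s
    have hn1 : 1 ≤ n := by
      rcases Nat.eq_zero_or_pos n with h | h
      · subst h
        have := (Nat.modEq_iff_dvd' (by omega)).1 hn
        have := Nat.le_of_dvd (by omega) this
        omega
      · exact h
    obtain ⟨s, hs⟩ := (Nat.modEq_iff_dvd' hn1).1 hn.symm
    have hn' : n = 1 + p ^ t * s := by omega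
    refine gen 1 t s (by omega) hmt le_rfl ?_
    have hpm : 0 < p ^ m := pow_pos hp.pos m
    apply Nat.eq_of_mul_eq_mul_right hpm
    rw [← hN, hn', one_mul]
    have e1 : p ^ (t - m) * p ^ m = p ^ t := by rw [← pow_add, Nat.sub_add_cancel hmt]
    obtain ⟨r, hr⟩ : ∃ r, p ^ t = r + 1 := ⟨p ^ t - 1, by omega⟩
    calc (p ^ t - 1) * (1 + p ^ t * s) + 1 = p ^ t + s * ((p ^ t - 1) * p ^ t) := by
          rw [hr]; simp; ring
      _ = (p ^ (t - m) + s * ((p ^ t - 1) * p ^ (t - m))) * p ^ m := by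
          rw [add_mul, e1]; congr 1; rw [← e1]; ring
  · obtain ⟨A, hA1, hA2⟩ : ∃ A, m ≤ A * t ∧ A * t < m + t := by
      refine ⟨(m + t - 1) / t, ?_, ?_⟩
      · have := Nat.div_add_mod (m + t - 1) t
        have := Nat.mod_lt (m + t - 1) ht
        rw [mul_comm]
        omega
      · have := Nat.div_mul_le_self (m + t - 1) t
        omega
    have hd : p ^ t - 1 ∣ (p ^ t) ^ A - 1 := by
      simpa using Nat.sub_dvd_pow_sub_pow (p ^ t) 1 A
    have hqq : p ^ (A * t - m) ≤ p ^ t - 1 := by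
      have : p ^ (A * t - m) < p ^ t := Nat.pow_lt_pow_right hp.one_lt (by omega)
      omega
    have hcop : Nat.Coprime (p ^ t - 1) (p ^ m) := by
      apply Nat.Coprime.pow_right
      rw [Nat.coprime_comm, hp.coprime_iff_not_dvd]
      intro hdv
      have h2 : p ∣ p ^ t := dvd_pow_self p ht.ne'
      have := (Nat.dvd_sub h2 hdv)
      rw [Nat.sub_sub_self (by omega)] at this
      exact hp.one_lt.ne' (Nat.dvd_one.1 this)
    have hmod : p ^ (A * t - m) ≡ ν [MOD p ^ t - 1] := by
      refine Nat.ModEq.cancel_right_of_coprime (c := p ^ m) hcop ?_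
      rw [← hN, ← pow_add, Nat.sub_add_cancel hA1]
      have h1 : 1 ≡ p ^ (A * t) [MOD p ^ t - 1] := by
        rw [Nat.modEq_iff_dvd' (Nat.one_le_pow _ _ hp.pos), mul_comm, pow_mul]
        exact hd
      have h2 : (p ^ t - 1) * n + 1 ≡ 1 [MOD p ^ t - 1] := by
        simp [Nat.ModEq]
      exact (h2.trans h1).symm
    have hle : p ^ (A * t - m) ≤ ν := by
      by_contra hlt
      push Not at hlt
      have := (Nat.modEq_iff_dvd' hlt.le).1 hmod.symm
      have := Nat.le_of_dvd (by omega) this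
      omega
    obtain ⟨j, hj⟩ := (Nat.modEq_iff_dvd' hle).1 hmod
    refine gen A m j hA1 le_rfl hmt ?_
    rw [Nat.sub_self, pow_zero, mul_one, mul_comm j]
    omega

theorem sufficiency {F G : Type} {n q ν κ : ℕ} [AddCommGroup F] [Fintype F] [DecidableEq F]
    [AddCommGroup G] [Fintype G] (e : Fin q ≃ F) (h : Fin n → F →+ G) (H : MS h ν)
    (S : Finset G) (hS : S.card = κ) (x : Fin n → Fin q) :
    Nat.card {y : Fin n → Fin q // y ∈ {y : Fin n → Fin q | ∑ i, h i (e (y i)) ∈ S} ∧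
      hammingDist x y ≤ 1} = ν * κ := by
  classical
  rw [Nat.card_eq_fintype_card, Fintype.card_subtype]
  have : (univ.filter (fun y => y ∈ {y : Fin n → Fin q | ∑ i, h i (e (y i)) ∈ S} ∧
      hammingDist x y ≤ 1)) = (univ.filter (fun y => hammingDist x y ≤ 1)).filter
        (fun y => ∑ i, h i (e (y i)) ∈ S) := by
    ext y; simp [and_comm]
  rw [this, card_filter, ball_sum]
  set s := ∑ i, h i (e (x i)) with hs
  have hup : ∀ i a, ∑ j, h j (e (Function.update x i a j)) = s + h i (e a - e (x i)) := by
    intro i a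
    rw [hs, ← sub_eq_iff_eq_add', ← sum_sub_distrib, sum_eq_single i]
    · simp
    · intro j _ hj
      simp [hj]
    · simp
  simp only [hup]
  have := H (fun v => if s + v ∈ S then 1 else 0)
  rw [add_zero] at this
  have h2 : ∑ v, (if s + v ∈ S then 1 else 0) = κ := by
    refine Eq.trans ?_ hS
    refine (Equiv.sum_comp (Equiv.addLeft s) (fun v => if v ∈ S then 1 else 0)).trans ?_
    simp
  rw [h2] at this
  rw [← this]
  congr 1
  refine sum_congr rfl fun i _ => ?_
  refine Finset.sum_bij (fun a _ => e a - e (x i)) ?_ ?_ ?_ ?_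
  · intro a ha
    simp at ha
    simp [sub_eq_zero, ha]
  · intro a _ b _ hab
    simpa using hab
  · intro b hb
    simp at hb
    refine ⟨e.symm (b + e (x i)), ?_, by simp⟩
    simp [Equiv.symm_apply_eq, hb]
  · intros; rfl

theorem stmt_19 (p t n μ : ℕ) (hp : p.Prime) (ht : 0 < t) (hμ : 0 < μ) :
    (∃ C : Set (Fin n → Fin (p ^ t)), C.Nonempty ∧ C ≠ Set.univ ∧
        ∀ x : Fin n → Fin (p ^ t),
          Nat.card {y : Fin n → Fin (p ^ t) // y ∈ C ∧ hammingDist x y ≤ 1} = μ)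
    ↔ (μ < (p ^ t - 1) * n + 1 ∧
       ((p ^ t - 1) * n + 1) ∣ μ * (p ^ t) ^ n ∧
       n ≡ 1 [MOD p ^ t]) := by
  constructor
  · rintro ⟨C, h1, h2, h3⟩
    exact necessity n (p ^ t) μ (pow_pos hp.pos t) C h1 h2 h3
  rintro ⟨hlt, ⟨D, hD⟩, hn⟩
  classical
  have _ : Fact p.Prime := ⟨hp⟩
  set N := (p ^ t - 1) * n + 1 with hNdef
  have hNpos : 0 < N := by omega
  rw [← pow_mul] at hD
  have hD0 : D ≠ 0 := by
    rintro rfl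
    have : 0 < μ * p ^ (t * n) := Nat.mul_pos hμ (pow_pos hp.pos _)
    omega
  obtain ⟨k, κ, hκ, rfl⟩ := Nat.exists_eq_pow_mul_and_not_dvd hD0 p hp.ne_one
  have hcop : Nat.Coprime κ (p ^ (t * n)) :=
    Nat.Coprime.pow_right _ (Nat.coprime_comm.1 ((hp.coprime_iff_not_dvd).2 hκ))
  have hκμ : κ ∣ μ := by
    apply hcop.dvd_of_dvd_mul_right
    rw [hD]; exact ⟨N * p ^ k, by ring⟩
  obtain ⟨ν, rfl⟩ := hκμ
  have hκ0 : 0 < κ := Nat.pos_of_mul_pos_right hμ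
  have hltD : p ^ k * κ < p ^ (t * n) := by
    have h1 : κ * ν * p ^ (t * n) < N * p ^ (t * n) :=
      Nat.mul_lt_mul_of_pos_right hlt (pow_pos hp.pos _)
    rw [hD] at h1
    exact Nat.lt_of_mul_lt_mul_left h1
  have hk : k < t * n := by
    rw [← Nat.pow_lt_pow_iff_right hp.one_lt]
    exact lt_of_le_of_lt (Nat.le_mul_of_pos_right _ hκ0) hltD
  obtain ⟨m, hm⟩ : ∃ m, t * n = k + m := ⟨t * n - k, by omega⟩
  have hm0 : 0 < m := by omega
  rw [hm, pow_add] at hltD hD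
  have hpk : 0 < p ^ k := pow_pos hp.pos k
  have hκm : κ < p ^ m := Nat.lt_of_mul_lt_mul_left hltD
  have hN : N = ν * p ^ m := by
    apply Nat.eq_of_mul_eq_mul_left (Nat.mul_pos hpk hκ0)
    linarith
  let _ : Fintype (GaloisField p t) := Fintype.ofFinite _
  obtain ⟨ι, _, h, H⟩ := exists_MS p t m n ν ht hm0 hn hN
  have hcF : Fintype.card (GaloisField p t) = p ^ t := by
    rw [← Nat.card_eq_fintype_card, GaloisField.card p t ht.ne']
  have hcG : Fintype.card (Fin m → ZMod p) = p ^ m := by simp [ZMod.card]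
  have hq2 : 2 ≤ p ^ t := hp.two_le.trans (Nat.le_self_pow ht.ne' p)
  have hcι : Fintype.card ι = n := by
    have h1 := H.card
    rw [hcF, hcG, ← hN, hNdef] at h1
    exact Nat.eq_of_mul_eq_mul_left (by omega : 0 < p ^ t - 1) (by omega)
  let ei : Fin n ≃ ι := (Fintype.equivFinOfCardEq hcι).symm
  let e : Fin (p ^ t) ≃ GaloisField p t := (Fintype.equivFinOfCardEq hcF).symm
  have H' : MS (fun i => h (ei i)) ν := by
    intro g
    rw [← H g, ei.sum_comp (fun i => ∑ x ∈ univ.erase 0, g (h i x))]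
  obtain ⟨S, -, hS⟩ := Finset.exists_subset_card_eq (s := (univ : Finset (Fin m → ZMod p)))
    (n := κ) (by rw [card_univ, hcG]; exact hκm.le)
  have hfin := fun x => sufficiency e (fun i => h (ei i)) H' S hS x
  refine ⟨{y | ∑ i, h (ei i) (e (y i)) ∈ S}, ?_, ?_, ?_⟩
  · have h1 := hfin (fun _ => ⟨0, by omega⟩)
    have : 0 < ν * κ := by rw [mul_comm]; exact hμ
    rw [← h1] at this
    obtain ⟨⟨y, hy, _⟩⟩ := (Nat.card_pos_iff.1 this).1
    exact ⟨y, hy⟩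
  · intro hu
    have h1 := hfin (fun _ => ⟨0, by omega⟩)
    rw [hu, Nat.card_eq_fintype_card, Fintype.card_subtype] at h1
    simp only [Set.mem_univ, true_and] at h1
    rw [ball_card (by omega)] at h1
    rw [mul_comm] at h1
    rw [mul_comm κ] at hlt
    rw [hNdef, mul_comm (p ^ t - 1)] at hlt
    omega
  · intro x
    rw [hfin x, mul_comm]
end
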